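/- Central limit theorem for blocks of a fixed size: fix an integer l ≥ 1, let X_n^{(l)} be the number of blocks of size l in a uniformly random non-crossing partition of [n], let μ_n = (1/C_n)·Σ_{π ∈ NC(n)} k_l(π) be its mean and σ_n² = (1/C_n)·Σ_{π} k_l(π)² − μ_n² its variance. Then for every real x, the probability (1/C_n)·#{π ∈ NC(n) : k_l(π) ≤ μ_n + x·σ_n} converges, as n → ∞, to Φ(x), the cumulative distribution function of the standard Gaussian distribution. -/

import Mathlib

/-- A finite partition of `Fin n` (representing `[n] = {1, …, n}`) is *non-crossing* if
there are no indices `a < b < c < d` with `a, c` in one block and `b, d` in a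
different block. -/
def IsNonCrossing {n : ℕ} (P : Finpartition (Finset.univ : Finset (Fin n))) : Prop :=
  ∀ a b c d : Fin n, a < b → b < c → c < d →
    ∀ B ∈ P.parts, ∀ B' ∈ P.parts,
      a ∈ B → c ∈ B → b ∈ B' → d ∈ B' → B = B'

/-- The type of non-crossing partitions of `[n]`. -/
def NCPart (n : ℕ) : Type :=
  {P : Finpartition (Finset.univ : Finset (Fin n)) // IsNonCrossing P}

noncomputable instance (n : ℕ) : Fintype (NCPart n) :=
  Fintype.ofInjective (fun P => P.1.parts)
    (fun _ _ h => Subtype.ext (Finpartition.ext h))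

/-- The number of blocks of a non-crossing partition. -/
def numBlocks {n : ℕ} (P : NCPart n) : ℕ := P.1.parts.card

/-- The number of blocks of size `l` of a non-crossing partition. -/
def numBlocksOfSize {n : ℕ} (l : ℕ) (P : NCPart n) : ℕ :=
  (P.1.parts.filter fun B => B.card = l).card

open Filter ProbabilityTheory

/-- The mean number of blocks of size `l` of a uniformly random non-crossing partition
of `[n]`. -/
noncomputable def meanBlocksOfSize (l n : ℕ) : ℝ :=
  (∑ π : NCPart n, (numBlocksOfSize l π : ℝ)) / (Fintype.card (NCPart n) : ℝ)

/-- The variance of the number of blocks of size `l` of a uniformly random non-crossing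
partition of `[n]`. -/
noncomputable def varBlocksOfSize (l n : ℕ) : ℝ :=
  (∑ π : NCPart n, (numBlocksOfSize l π : ℝ) ^ 2) / (Fintype.card (NCPart n) : ℝ) -
    (meanBlocksOfSize l n) ^ 2


namespace NCCLT

open Finset

/-- The minimum of the block containing `m`. -/
noncomputable def bmin {n : ℕ} (P : NCPart n) (m : Fin n) : Fin n :=
  (P.1.part m).min' ⟨m, P.1.mem_part (mem_univ m)⟩

lemma bmin_mem {n : ℕ} (P : NCPart n) (m : Fin n) : bmin P m ∈ P.1.part m :=
  Finset.min'_mem _ _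

lemma bmin_le {n : ℕ} (P : NCPart n) (m : Fin n) : bmin P m ≤ m :=
  Finset.min'_le _ _ (P.1.mem_part (mem_univ m))

lemma part_bmin {n : ℕ} (P : NCPart n) (m : Fin n) : P.1.part (bmin P m) = P.1.part m :=
  P.1.part_eq_of_mem (P.1.part_mem.2 (mem_univ m)) (bmin_mem P m)

lemma bmin_congr {n : ℕ} (P : NCPart n) {m m' : Fin n} (h : P.1.part m = P.1.part m') :
    bmin P m = bmin P m' := by
  unfold bmin; simp only [h]

lemma bmin_eq_iff {n : ℕ} (P : NCPart n) {m m' : Fin n} :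
    bmin P m = bmin P m' ↔ P.1.part m = P.1.part m' :=
  ⟨fun h => by rw [← part_bmin P m, h, part_bmin], bmin_congr P⟩

lemma bmin_bmin {n : ℕ} (P : NCPart n) (m : Fin n) : bmin P (bmin P m) = bmin P m :=
  bmin_congr P (part_bmin P m)

lemma bmin_nc {n : ℕ} (P : NCPart n) {a b c d : Fin n} (hab : a < b) (hbc : b < c) (hcd : c < d)
    (h1 : bmin P a = bmin P c) (h2 : bmin P b = bmin P d) : bmin P a = bmin P b := by
  rw [bmin_eq_iff] at *
  refine P.2 a b c d hab hbc hcd _ (P.1.part_mem.2 (mem_univ a)) _ (P.1.part_mem.2 (mem_univ b))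
    (P.1.mem_part (mem_univ a)) ?_ (P.1.mem_part (mem_univ b)) ?_
  · rw [h1]; exact P.1.mem_part (mem_univ c)
  · rw [h2]; exact P.1.mem_part (mem_univ d)

/-- The code of a non-crossing partition. -/
noncomputable def code {n : ℕ} (P : NCPart n) : Fin (n + 1) → ℕ :=
  fun i => #{m : Fin n | (bmin P m : ℕ) = i}

/-- Partial sums -/
def psum {n : ℕ} (a : Fin (n + 1) → ℕ) (k : ℕ) : ℕ :=
  ∑ j ∈ range k, a (Fin.ofNat (n + 1) j)

/-- The Lukasiewicz sequences. -/
def Luk (n : ℕ) : Finset (Fin (n + 1) → ℕ) :=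
  {a ∈ Finset.Nat.antidiagonalTuple (n + 1) n | ∀ k ≤ n, k ≤ psum a k}

lemma psum_total {n : ℕ} (a : Fin (n + 1) → ℕ) : psum a (n + 1) = ∑ i, a i := by
  unfold psum
  rw [← Fin.sum_univ_eq_sum_range (fun j => a (Fin.ofNat (n + 1) j)) (n+1)]
  apply sum_congr rfl
  intro i _
  congr 1
  ext; simp

/-- The relation determining the block minimum. -/
def Rel (S : ℕ → ℤ) (i j : ℕ) : Prop :=
  i ≤ j ∧ S i ≤ S (j + 1) ∧ ∀ k, i < k → k ≤ j → S (j + 1) < S k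

lemma Rel.unique {S : ℕ → ℤ} {i i' j : ℕ} (h : Rel S i j) (h' : Rel S i' j) : i = i' := by
  rcases lt_trichotomy i i' with hl | hl | hl
  · have := h.2.2 i' hl h'.1
    have := h'.2.1
    omega
  · exact hl
  · have := h'.2.2 i hl h.1
    have := h.2.1
    omega

/-- the walk -/
def walk {n : ℕ} (a : Fin (n + 1) → ℕ) (k : ℕ) : ℤ := (psum a k : ℤ) - k

lemma psum_code {n : ℕ} (P : NCPart n) (k : ℕ) (hk : k ≤ n + 1) :
    psum (code P) k = #{m : Fin n | (bmin P m : ℕ) < k} := by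
  have : ({m : Fin n | (bmin P m : ℕ) < k} : Finset (Fin n)) =
      (range k).biUnion fun j => {m : Fin n | (bmin P m : ℕ) = j} := by
    ext m; simp
  rw [this, card_biUnion]
  · unfold psum code
    apply sum_congr rfl
    intro j hj
    have hj : j < n + 1 := by simp at hj; omega
    simp [Nat.mod_eq_of_lt hj]
  · intro x _ y _ hxy
    rw [Function.onFun, Finset.disjoint_left]
    intro m; simp; omega

lemma walk_code {n : ℕ} (P : NCPart n) (k : ℕ) (hk : k ≤ n) :
    walk (code P) k = #{m : Fin n | k ≤ m.1 ∧ (bmin P m : ℕ) < k} := by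
  unfold walk
  rw [psum_code P k (by omega)]
  have h1 : ({m : Fin n | (bmin P m : ℕ) < k} : Finset (Fin n)) =
     ({m : Fin n | k ≤ m.1 ∧ (bmin P m : ℕ) < k} : Finset (Fin n)) ∪
     ({m : Fin n | m.1 < k} : Finset (Fin n)) := by
    ext m
    have := bmin_le P m
    rw [Fin.le_def] at this
    simp; omega
  have h2 : #({m : Fin n | m.1 < k} : Finset (Fin n)) = k := by
    rw [Fin.card_filter_val_lt]; omega
  rw [h1, card_union_of_disjoint, h2]
  · push_cast; ring
  · rw [Finset.disjoint_left]; intro m; simp; omega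

lemma code_mem {n : ℕ} (P : NCPart n) : code P ∈ Luk n := by
  simp only [Luk, mem_filter, Finset.Nat.mem_antidiagonalTuple]
  constructor
  · rw [← psum_total, psum_code P _ le_rfl]
    have : ({m : Fin n | (bmin P m : ℕ) < n + 1} : Finset (Fin n)) = univ := by
      ext m; have := (bmin P m).2
      simp only [mem_filter, mem_univ, true_and, iff_true]; omega
    rw [this]; simp
  · intro k hk
    have := walk_code P k hk
    unfold walk at this
    omega

lemma rel_code {n : ℕ} (P : NCPart n) (j : Fin n) : Rel (walk (code P)) (bmin P j) j := by
  have hle := bmin_le P j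
  rw [Fin.le_def] at hle
  have hj := j.2
  refine ⟨hle, ?_, ?_⟩
  · rw [walk_code P _ (by omega), walk_code P _ (by omega)]
    norm_cast
    apply card_le_card
    intro m
    simp only [mem_filter, mem_univ, true_and]
    rintro ⟨h1, h2⟩
    have h3 : j < m := by
      by_contra hcon
      have hmj : m ≠ j := by rintro rfl; omega
      have hmj : m < j := by
        rw [Fin.lt_def]; rw [Fin.lt_def] at hcon
        have : m.1 ≠ j.1 := fun h => hmj (Fin.ext h)
        omega
      have hmi : m ≠ bmin P j := by rintro rfl; rw [bmin_bmin] at h2; omega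
      have hmi : bmin P j < m := by
        rw [Fin.lt_def]
        have : m.1 ≠ (bmin P j).1 := fun h => hmi (Fin.ext h)
        omega
      have := bmin_nc P (a := bmin P m) (b := bmin P j) (c := m) (d := j) h2 hmi hmj
        (bmin_bmin P m) (bmin_bmin P j)
      rw [bmin_bmin, bmin_bmin] at this
      rw [this] at h2; omega
    rw [Fin.lt_def] at h3
    omega
  · intro k hk hkj
    rw [walk_code P _ (by omega), walk_code P _ (by omega)]
    norm_cast
    apply card_lt_card
    rw [Finset.ssubset_iff_of_subset]
    · refine ⟨j, ?_, ?_⟩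
      · simp; omega
      · simp
    · intro m
      simp only [mem_filter, mem_univ, true_and]
      rintro ⟨h1, h2⟩
      refine ⟨by omega, ?_⟩
      by_contra hcon
      have hne : bmin P m ≠ bmin P j := by intro h; rw [h] at hcon; omega
      have hne2 : bmin P m ≠ j := by
        intro h
        have := bmin_bmin P m
        rw [h] at this; rw [this] at hk; omega
      have h3 : bmin P m < j := by
        rw [Fin.lt_def]
        have : (bmin P m).1 ≠ j.1 := fun h => hne2 (Fin.ext h)
        omega
      have := bmin_nc P (a := bmin P j) (b := bmin P m) (c := j) (d := m)
        (by rw [Fin.lt_def]; omega) h3 (by rw [Fin.lt_def]; omega)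
        (bmin_bmin P j) (bmin_bmin P m)
      rw [bmin_bmin, bmin_bmin] at this
      exact hne this.symm

lemma code_injective {n : ℕ} : Function.Injective (code (n := n)) := by
  intro P Q h
  have hb : ∀ j, bmin P j = bmin Q j := by
    intro j
    have h1 := rel_code P j
    have h2 := rel_code Q j
    rw [h] at h1
    exact Fin.ext (h1.unique h2)
  have hp : ∀ j, P.1.part j = Q.1.part j := by
    intro j
    ext m
    rw [P.1.mem_part_iff_part_eq_part (mem_univ _) (mem_univ _),
      Q.1.mem_part_iff_part_eq_part (mem_univ _) (mem_univ _), ← bmin_eq_iff, ← bmin_eq_iff,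
      hb, hb]
  apply Subtype.ext
  apply Finpartition.ext
  ext B
  constructor
  · intro hB
    obtain ⟨x, hx⟩ := P.1.nonempty_of_mem_parts hB
    rw [← P.1.part_eq_of_mem hB hx, hp]
    exact Q.1.part_mem.2 (mem_univ x)
  · intro hB
    obtain ⟨x, hx⟩ := Q.1.nonempty_of_mem_parts hB
    rw [← Q.1.part_eq_of_mem hB hx, ← hp]
    exact P.1.part_mem.2 (mem_univ x)

lemma exists_rel {S : ℕ → ℤ} (h0 : S 0 = 0) (j : ℕ) (hS : 0 ≤ S (j + 1)) : ∃ i, Rel S i j := by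
  classical
  refine ⟨Nat.findGreatest (fun i => S i ≤ S (j + 1)) j, Nat.findGreatest_le j, ?_, ?_⟩
  · exact Nat.findGreatest_spec (P := fun i => S i ≤ S (j + 1)) (Nat.zero_le j) (by simpa [h0])
  · intro k hk hkj
    have := Nat.findGreatest_is_greatest hk hkj
    omega

lemma rel_self {S : ℕ → ℤ} {i j : ℕ} (h : Rel S i j) : Rel S i i := by
  refine ⟨le_rfl, ?_, fun k _ _ => by omega⟩
  rcases eq_or_lt_of_le h.1 with e | e
  · subst e; exact h.2.1
  · have := h.2.2 (i + 1) (by omega) (by omega)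
    have := h.2.1
    omega

lemma rel_nc {S : ℕ → ℤ} {a b c d i i' : ℕ} (hab : a < b) (hbc : b < c) (hcd : c < d)
    (h1 : Rel S i a) (h2 : Rel S i c) (h3 : Rel S i' b) (h4 : Rel S i' d) : i = i' := by
  have := h1.1
  have := h3.1
  rcases lt_trichotomy i i' with hl | hl | hl
  · have := h2.2.2 i' hl (by omega)
    have := h4.2.2 (c + 1) (by omega) (by omega)
    have := h4.2.1
    omega
  · exact hl
  · have := h3.2.2 i hl (by omega)
    have := h2.2.2 (b + 1) (by omega) (by omega)
    have := h2.2.1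
    omega

lemma code_surj {n : ℕ} (a : Fin (n + 1) → ℕ) (ha : a ∈ Luk n) : ∃ P : NCPart n, code P = a := by
  classical
  simp only [Luk, mem_filter, Finset.Nat.mem_antidiagonalTuple] at ha
  obtain ⟨hsum, hpos⟩ := ha
  set S := walk a with hS
  have h0 : S 0 = 0 := by simp [S, walk, psum]
  have hex : ∀ j : Fin n, ∃ i : Fin n, Rel S i j := by
    intro j
    obtain ⟨i, hi⟩ := exists_rel h0 j.1 (by
      have := hpos (j.1 + 1) (by omega)
      simp only [S, walk]; omega)
    exact ⟨⟨i, lt_of_le_of_lt hi.1 j.2⟩, hi⟩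
  choose β hβ using hex
  have hββ : ∀ j, β (β j) = β j := fun j => Fin.ext ((hβ (β j)).unique (rel_self (hβ j)))
  let P0 : Finpartition (univ : Finset (Fin n)) := Finpartition.ofSetoid (Setoid.ker β)
  have hpart : ∀ x y, x ∈ P0.part y ↔ β y = β x := fun x y =>
    Finpartition.mem_part_ofSetoid_iff_rel
  have hnc : IsNonCrossing P0 := by
    intro p q r s hpq hqr hrs B hB B' hB' hp hr hq hs
    rw [← P0.part_eq_of_mem hB hp] at hr ⊢
    rw [← P0.part_eq_of_mem hB' hq] at hs ⊢
    rw [hpart] at hr hs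
    rw [← P0.mem_part_iff_part_eq_part (mem_univ _) (mem_univ _), hpart]
    have h1 := hβ r
    rw [← hr] at h1
    have h2 := hβ s
    rw [← hs] at h2
    exact (Fin.ext (rel_nc hpq hqr hrs (hβ p) h1 (hβ q) h2)).symm
  let P : NCPart n := ⟨P0, hnc⟩
  have hbm : ∀ j, bmin P j = β j := by
    intro j
    apply le_antisymm
    · apply Finset.min'_le
      change β j ∈ P0.part j
      rw [hpart, hββ]
    · have : bmin P j ∈ P0.part j := bmin_mem P j
      rw [hpart] at this
      rw [this, Fin.le_def]
      exact (hβ _).1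
  refine ⟨P, ?_⟩
  have hle : ∀ i, code P i ≤ a i := by
    intro i
    unfold code
    simp only [hbm]
    have hinj : #{m : Fin n | (β m : ℕ) = i} ≤ #(Finset.Icc (S i) (S (i + 1))) := by
      apply card_le_card_of_injOn (fun m : Fin n => S (m + 1))
      · intro m hm
        simp only [coe_filter, mem_univ, true_and, Set.mem_ofPred_eq] at hm
        have := hβ m
        rw [hm] at this
        simp only [coe_Icc, Set.mem_Icc]
        refine ⟨this.2.1, ?_⟩
        rcases eq_or_lt_of_le this.1 with e | e
        · rw [e]
        · exact (this.2.2 (i + 1) (by omega) (by omega)).le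
      · intro m hm m' hm' h
        simp only [coe_filter, mem_univ, true_and, Set.mem_ofPred_eq] at hm hm'
        have h1 := hβ m
        have h2 := hβ m'
        rw [hm] at h1
        rw [hm'] at h2
        simp only at h
        have := h1.1
        have := h2.1
        by_contra hne
        rcases lt_or_gt_of_ne (fun h => hne (Fin.ext h) : m.1 ≠ m'.1) with hl | hl
        · have := h2.2.2 (m + 1) (by omega) (by omega)
          omega
        · have := h1.2.2 (m' + 1) (by omega) (by omega)
          omega
    refine hinj.trans ?_
    rw [Int.card_Icc]
    have : psum a (i + 1) = psum a i + a i := by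
      unfold psum
      rw [sum_range_succ]
      congr 2
      ext; simp
    simp only [S, walk]
    push_cast
    omega
  have hs : ∑ i, code P i = ∑ i, a i := by
    have := code_mem P
    simp only [Luk, mem_filter, Finset.Nat.mem_antidiagonalTuple] at this
    rw [this.1, hsum]
  funext i
  exact (Finset.sum_eq_sum_iff_of_le (fun i _ => hle i)).1 hs i (mem_univ i)

lemma code_bmin {n : ℕ} (P : NCPart n) (m : Fin n) :
    code P (bmin P m).castSucc = #(P.1.part m) := by
  unfold code
  congr 1
  ext x
  simp only [Fin.val_castSucc, mem_filter, mem_univ, true_and]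
  rw [P.1.mem_part_iff_part_eq_part (mem_univ _) (mem_univ _), ← bmin_eq_iff]
  exact ⟨fun h => Fin.ext h, fun h => by rw [h]⟩

lemma count_code {n l : ℕ} (hl : 1 ≤ l) (P : NCPart n) :
    #{i | code P i = l} = numBlocksOfSize l P := by
  unfold numBlocksOfSize
  symm
  refine Finset.card_bij
    (fun B hB => (B.min' (P.1.nonempty_of_mem_parts (mem_filter.1 hB).1)).castSucc) ?_ ?_ ?_
  · intro B hB
    have hB' := mem_filter.1 hB
    obtain ⟨x, hx⟩ := P.1.nonempty_of_mem_parts hB'.1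
    have := P.1.part_eq_of_mem hB'.1 hx
    subst this
    have h := code_bmin P x
    simp only [mem_filter, mem_univ, true_and]
    rw [← hB'.2, ← h]
    rfl
  · intro B hB C hC h
    have hB' := mem_filter.1 hB
    have hC' := mem_filter.1 hC
    have h := Fin.castSucc_injective _ h
    have m1 := B.min'_mem (P.1.nonempty_of_mem_parts hB'.1)
    have m2 := C.min'_mem (P.1.nonempty_of_mem_parts hC'.1)
    rw [h] at m1
    exact (P.1.part_eq_of_mem hB'.1 m1).symm.trans (P.1.part_eq_of_mem hC'.1 m2)
  · intro i hi
    simp only [mem_filter, mem_univ, true_and] at hi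
    have hpos : 0 < code P i := by omega
    unfold code at hpos
    obtain ⟨m, hm⟩ := card_pos.1 hpos
    simp only [mem_filter, mem_univ, true_and] at hm
    have e : i = (bmin P m).castSucc := Fin.ext hm.symm
    refine ⟨P.1.part m, ?_, ?_⟩
    · rw [mem_filter]
      refine ⟨P.1.part_mem.2 (mem_univ m), ?_⟩
      rw [← code_bmin, ← e, hi]
    · exact e.symm

lemma sum_NC_eq_sum_Luk {n l : ℕ} (hl : 1 ≤ l) {M : Type*} [AddCommMonoid M] (g : ℕ → M) :
    ∑ P : NCPart n, g (numBlocksOfSize l P) = ∑ a ∈ Luk n, g #{i | a i = l} := by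
  refine Finset.sum_bij (fun P _ => code P) (fun P _ => code_mem P)
    (fun P _ Q _ h => code_injective h) ?_ ?_
  · intro a ha
    obtain ⟨P, hP⟩ := code_surj a ha
    exact ⟨P, mem_univ _, hP⟩
  · intro P _
    rw [count_code hl]

/-- rotation of a sequence -/
def rot {n : ℕ} (r : Fin (n + 1)) (a : Fin (n + 1) → ℕ) : Fin (n + 1) → ℕ := fun i => a (i + r)

lemma walk_rot {n : ℕ} (r : Fin (n + 1)) (a : Fin (n + 1) → ℕ) (k : ℕ) :
    walk (rot r a) k = walk a (r + k) - walk a r := by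
  have : psum a (r + k) = psum a r + psum (rot r a) k := by
    unfold psum rot
    rw [sum_range_add]
    congr 1
    apply sum_congr rfl
    intro j _
    congr 1
    ext
    simp [Fin.val_add, add_comm]
  unfold walk
  rw [this]; push_cast; ring

lemma walk_period {n : ℕ} (a : Fin (n + 1) → ℕ) (ha : ∑ i, a i = n) (k : ℕ) :
    walk a (n + 1 + k) = walk a k - 1 := by
  have : psum a (n + 1 + k) = n + psum a k := by
    conv_lhs => unfold psum
    rw [sum_range_add]
    change psum a (n + 1) + _ = _
    rw [psum_total, ha]
    congr 1
    apply sum_congr rfl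
    intro j _
    congr 1
    ext
    simp
  unfold walk
  rw [this]; push_cast; ring

lemma rot_sum {n : ℕ} (r : Fin (n + 1)) (a : Fin (n + 1) → ℕ) : ∑ i, rot r a i = ∑ i, a i :=
  Equiv.sum_comp (Equiv.addRight r) a

lemma rot_count {n : ℕ} (l : ℕ) (r : Fin (n + 1)) (a : Fin (n + 1) → ℕ) :
    #{i | rot r a i = l} = #{i | a i = l} := by
  apply Finset.card_bijective (fun i => i + r) (Equiv.addRight r).bijective
  intro i
  rw [mem_filter, mem_filter]
  simp [rot]

lemma rot_mem_iff {n : ℕ} (r : Fin (n + 1)) (a : Fin (n + 1) → ℕ) (ha : ∑ i, a i = n) :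
    rot r a ∈ Luk n ↔ ∀ k ≤ n, walk a r ≤ walk a (r + k) := by
  simp only [Luk, mem_filter, Finset.Nat.mem_antidiagonalTuple, rot_sum, ha, true_and]
  refine forall_congr' fun k => forall_congr' fun hk => ?_
  have := walk_rot r a k
  conv_lhs at this => unfold walk
  omega

/-- The cycle lemma. -/
lemma cycle_lemma {n : ℕ} (a : Fin (n + 1) → ℕ) (ha : ∑ i, a i = n) :
    ∃! r : Fin (n + 1), rot r a ∈ Luk n := by
  classical
  have hne : (range (n + 1)).Nonempty := ⟨0, by simp⟩
  obtain ⟨r0, hr0, hmin⟩ := Finset.exists_min_image (range (n + 1)) (walk a) hne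
  have hex : ∃ r, r < n + 1 ∧ ∀ k < n + 1, walk a r ≤ walk a k :=
    ⟨r0, by simpa using hr0, fun k hk => hmin k (by simpa using hk)⟩
  let r := Nat.find hex
  have hr := Nat.find_spec hex
  have hfirst : ∀ k < r, walk a r < walk a k := by
    intro k hk
    have h1 := Nat.find_min hex hk
    by_contra hcon
    apply h1
    refine ⟨by omega, fun m hm => ?_⟩
    have := hr.2 m hm
    simp only [not_lt] at hcon
    exact hcon.trans this
  refine ⟨⟨r, hr.1⟩, ?_, ?_⟩
  · simp only
    rw [rot_mem_iff _ _ ha]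
    intro k hk
    simp only
    by_cases h : r + k < n + 1
    · exact hr.2 _ h
    · obtain ⟨m, hm⟩ : ∃ m, r + k = n + 1 + m := ⟨r + k - (n + 1), by omega⟩
      rw [hm, walk_period a ha]
      have := hr.1
      have := hfirst m (by omega)
      omega
  · have key : ∀ s s' : Fin (n + 1), s < s' → rot s a ∈ Luk n → rot s' a ∈ Luk n → False := by
      intro s s' hlt h1 h2
      rw [rot_mem_iff _ _ ha] at h1 h2
      rw [Fin.lt_def] at hlt
      have e1 := h1 (s' - s) (by omega)
      have e2 := h2 (n + 1 + s - s') (by omega)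
      rw [show (s : ℕ) + (s' - s) = s' by omega] at e1
      rw [show (s' : ℕ) + (n + 1 + s - s') = n + 1 + s by omega, walk_period a ha] at e2
      omega
    intro s hs
    have h' : rot (⟨r, hr.1⟩ : Fin (n + 1)) a ∈ Luk n := by
      rw [rot_mem_iff _ _ ha]
      intro k hk
      simp only
      by_cases h : r + k < n + 1
      · exact hr.2 _ h
      · obtain ⟨m, hm⟩ : ∃ m, r + k = n + 1 + m := ⟨r + k - (n + 1), by omega⟩
        rw [hm, walk_period a ha]
        have := hr.1
        have := hfirst m (by omega)
        omega
    rcases lt_trichotomy s ⟨r, hr.1⟩ with h | h | h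
    · exact (key _ _ h hs h').elim
    · exact h
    · exact (key _ _ h h' hs).elim

lemma rot_bij {n : ℕ} (r : Fin (n + 1)) : Function.Bijective (rot (n := n) r) := by
  refine Function.bijective_iff_has_inverse.2 ⟨rot (-r), ?_, ?_⟩
  · intro a; funext i; simp [rot]
  · intro a; funext i; simp [rot]

/-- Main combinatorial identity. -/
theorem sum_NC {n l : ℕ} (hl : 1 ≤ l) {M : Type*} [AddCommMonoid M] (g : ℕ → M) :
    (n + 1) • ∑ P : NCPart n, g (numBlocksOfSize l P) =
      ∑ a ∈ Finset.Nat.antidiagonalTuple (n + 1) n, g #{i | a i = l} := by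
  classical
  rw [sum_NC_eq_sum_Luk hl]
  have h1 : ∀ a ∈ Finset.Nat.antidiagonalTuple (n + 1) n,
      g #{i | a i = l} = ∑ r : Fin (n + 1), if rot r a ∈ Luk n then g #{i | rot r a i = l} else 0 := by
    intro a ha
    rw [Finset.Nat.mem_antidiagonalTuple] at ha
    obtain ⟨r, hr, hu⟩ := cycle_lemma a ha
    rw [Finset.sum_eq_single r, if_pos hr, rot_count]
    · intro s _ hs
      rw [if_neg (fun h => hs (hu s h))]
    · simp
  rw [sum_congr rfl h1, sum_comm]
  have h2 : ∀ r : Fin (n + 1), (∑ a ∈ Finset.Nat.antidiagonalTuple (n + 1) n,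
      if rot r a ∈ Luk n then g #{i | rot r a i = l} else 0) = ∑ a ∈ Luk n, g #{i | a i = l} := by
    intro r
    rw [← sum_filter]
    refine Finset.sum_bij (fun a _ => rot r a) ?_ ?_ ?_ ?_
    · intro a ha; exact (mem_filter.1 ha).2
    · intro a _ b _ h; exact (rot_bij r).1 h
    · intro b hb
      obtain ⟨a, rfl⟩ := (rot_bij r).2 b
      refine ⟨a, ?_, rfl⟩
      rw [mem_filter]
      refine ⟨?_, hb⟩
      rw [Finset.Nat.mem_antidiagonalTuple]
      have := (mem_filter.1 hb).1
      rwa [Finset.Nat.mem_antidiagonalTuple, rot_sum] at this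
    · intro a _; rfl
  rw [sum_congr rfl (fun r _ => h2 r)]
  simp

end NCCLT

namespace NCCLT

open Finset

lemma sum_tuple_prod {R : Type*} [CommRing R] (w : ℕ → R) (m n : ℕ) :
    ∑ a ∈ Finset.Nat.antidiagonalTuple m n, ∏ i, w (a i) =
      PowerSeries.coeff n ((PowerSeries.mk w) ^ m) := by
  classical
  have h : (PowerSeries.mk w) ^ m = ∏ _i : Fin m, PowerSeries.mk w := by simp
  rw [h, PowerSeries.coeff_prod]
  symm
  refine Finset.sum_bij' (fun f _ => (f : Fin m → ℕ)) (fun a _ => Finsupp.equivFunOnFinite.symm a)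
    ?_ ?_ ?_ ?_ ?_
  · intro f hf
    rw [Finset.mem_finsuppAntidiag] at hf
    rw [Finset.Nat.mem_antidiagonalTuple]
    exact hf.1
  · intro a ha
    rw [Finset.Nat.mem_antidiagonalTuple] at ha
    rw [Finset.mem_finsuppAntidiag]
    exact ⟨by simpa using ha, subset_univ _⟩
  · intro f _; ext; simp
  · intro a _; ext; simp
  · intro f _; simp

lemma prod_ite_count {R : Type*} [CommRing R] {m : ℕ} (l : ℕ) (u : R) (a : Fin m → ℕ) :
    ∏ i, (if a i = l then u else 1) = u ^ #{i | a i = l} := by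
  rw [prod_ite]; simp

lemma coeff_binom {R : Type*} [CommRing R] (l : ℕ) (e : R) (N n : ℕ) :
    PowerSeries.coeff n ((PowerSeries.mk fun j => if j = l then 1 + e else 1) ^ N) =
      ∑ r ∈ range (N + 1), e ^ r * (N.choose r : R) *
        (if r * l ≤ n then PowerSeries.coeff (n - r * l) ((PowerSeries.mk 1 : PowerSeries R) ^ (N - r))
          else 0) := by
  have h : (PowerSeries.mk fun j => if j = l then 1 + e else 1) =
      PowerSeries.C e * PowerSeries.X ^ l + PowerSeries.mk 1 := by
    ext j
    simp only [PowerSeries.coeff_mk, map_add, PowerSeries.coeff_C_mul, PowerSeries.coeff_X_pow,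
      Pi.one_apply]
    split_ifs <;> ring
  rw [h, add_pow, map_sum]
  apply sum_congr rfl
  intro r _
  have : ((PowerSeries.C e * PowerSeries.X ^ l) ^ r * PowerSeries.mk 1 ^ (N - r) *
      ((N.choose r : ℕ) : PowerSeries R)) =
      PowerSeries.C (e ^ r * (N.choose r : R)) * (PowerSeries.X ^ (r * l) *
        (PowerSeries.mk 1 : PowerSeries R) ^ (N - r)) := by
    rw [mul_pow, ← pow_mul, mul_comm l r]
    simp only [map_mul, map_pow, map_natCast]
    ring
  rw [this, PowerSeries.coeff_C_mul, PowerSeries.coeff_X_pow_mul']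

/-- The factorial moments. -/
lemma sum_choose_count (l n r : ℕ) (hr : r ≤ n) (hrl : r * l ≤ n) :
    ∑ a ∈ Finset.Nat.antidiagonalTuple (n + 1) n, ((#{i | a i = l}).choose r : ℝ) =
      ((n + 1).choose r : ℝ) * ((n - r + (n - r * l)).choose (n - r) : ℝ) := by
  have h1 := sum_tuple_prod (R := Polynomial ℝ)
    (fun j => if j = l then 1 + Polynomial.X else 1) (n + 1) n
  rw [coeff_binom] at h1
  have h2 := congrArg (fun q => Polynomial.coeff q r) h1
  simp only [prod_ite_count, Polynomial.finsetSum_coeff] at h2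
  simp only [Polynomial.coeff_one_add_X_pow] at h2
  rw [h2, Finset.sum_eq_single r]
  · rw [if_pos hrl, show n + 1 - r = (n - r) + 1 by omega, PowerSeries.mk_one_pow_eq_mk_choose_add,
      PowerSeries.coeff_mk]
    have : (Polynomial.X ^ r * (((n + 1).choose r : ℕ) : Polynomial ℝ) *
      (((n - r + (n - r * l)).choose (n - r) : ℕ) : Polynomial ℝ)) =
      Polynomial.C (((n + 1).choose r : ℝ) * ((n - r + (n - r * l)).choose (n - r) : ℝ)) *
        Polynomial.X ^ r := by
      simp only [map_mul, map_natCast]; ring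
    rw [this, Polynomial.coeff_C_mul_X_pow, if_pos rfl]
  · intro s hs hsr
    split_ifs
    · rw [show n + 1 - s = if s = n + 1 then 0 else (n - s) + 1 by
        simp at hs; split_ifs <;> omega]
      split_ifs
      · rw [pow_zero, PowerSeries.coeff_one]
        have : ∀ c : ℝ, Polynomial.coeff (Polynomial.X ^ s * (((n + 1).choose s : ℕ) : Polynomial ℝ) *
          Polynomial.C c) r = 0 := by
          intro c
          have : (Polynomial.X ^ s * (((n + 1).choose s : ℕ) : Polynomial ℝ) *
            Polynomial.C c) = Polynomial.C (((n + 1).choose s : ℝ) * c) * Polynomial.X ^ s := by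
            simp only [map_mul, map_natCast]; ring
          rw [this, Polynomial.coeff_C_mul_X_pow, if_neg hsr.symm]
        split_ifs
        · simpa using this 1
        · simp
      · rw [PowerSeries.mk_one_pow_eq_mk_choose_add, PowerSeries.coeff_mk]
        have : (Polynomial.X ^ s * (((n + 1).choose s : ℕ) : Polynomial ℝ) *
          (((n - s + (n - s * l)).choose (n - s) : ℕ) : Polynomial ℝ)) =
          Polynomial.C (((n + 1).choose s : ℝ) * ((n - s + (n - s * l)).choose (n - s) : ℝ)) *
            Polynomial.X ^ s := by
          simp only [map_mul, map_natCast]; ring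
        rw [this, Polynomial.coeff_C_mul_X_pow, if_neg hsr.symm]
    · simp
  · intro h; simp at h; omega

end NCCLT

namespace NCCLT

open Finset Filter Topology

/-- first-order expansion `f n = c + a / n + o(1/n)` -/
def HE (f : ℕ → ℝ) (c a : ℝ) : Prop := Tendsto (fun n : ℕ => (n : ℝ) * (f n - c)) atTop (𝓝 a)

lemma HE.tendsto {f : ℕ → ℝ} {c a : ℝ} (h : HE f c a) : Tendsto f atTop (𝓝 c) := by
  have h1 : Tendsto (fun n : ℕ => ((n : ℝ) * (f n - c)) * (n : ℝ)⁻¹ + c) atTop (𝓝 (a * 0 + c)) :=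
    (Tendsto.mul h tendsto_inv_atTop_nhds_zero_nat).add_const c
  rw [mul_zero, zero_add] at h1
  refine h1.congr' ?_
  filter_upwards [eventually_gt_atTop 0] with n hn
  have : (n : ℝ) ≠ 0 := by positivity
  field_simp
  ring

lemma HE.mul {f g : ℕ → ℝ} {c d a b : ℝ} (hf : HE f c a) (hg : HE g d b) :
    HE (fun n => f n * g n) (c * d) (a * d + c * b) := by
  have := (Tendsto.mul hf hg.tendsto).add (Tendsto.const_mul c hg)
  refine this.congr fun n => ?_
  ring

lemma HE.congr' {f g : ℕ → ℝ} {c a : ℝ} (hf : HE f c a) (h : f =ᶠ[atTop] g) : HE g c a := by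
  refine Tendsto.congr' ?_ hf
  filter_upwards [h] with n hn
  rw [hn]

lemma HE_factor (m s : ℝ) : HE (fun n => ((n : ℝ) - m) / (2 * n - s)) (1 / 2) ((s - 2 * m) / 4) := by
  have h1 : Tendsto (fun n : ℕ => (s - 2 * m) / (2 * (2 - s * (n : ℝ)⁻¹))) atTop
      (𝓝 ((s - 2 * m) / (2 * (2 - s * 0)))) := by
    apply Tendsto.div tendsto_const_nhds _ (by norm_num)
    exact ((tendsto_inv_atTop_nhds_zero_nat.const_mul s).const_sub 2).const_mul 2
  have e : (s - 2 * m) / (2 * (2 - s * 0)) = (s - 2 * m) / 4 := by norm_num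
  rw [e] at h1
  refine h1.congr' ?_
  have hev : ∀ᶠ n : ℕ in atTop, s < n := tendsto_natCast_atTop_atTop.eventually_gt_atTop s
  filter_upwards [hev, eventually_gt_atTop 0] with n hs hn
  have h0 : (0 : ℝ) < n := by exact_mod_cast hn
  have h2 : 2 * (n : ℝ) - s ≠ 0 := by
    intro h; linarith
  have h3 : 2 - s * (n : ℝ)⁻¹ ≠ 0 := by
    intro h
    apply h2
    field_simp at h
    linarith
  have h4 : (2 - s * (n : ℝ)⁻¹) = (2 * n - s) / n := by field_simp
  rw [h4]
  field_simp
  ring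

/-- the basic ratio -/
noncomputable def rho (r m n : ℕ) : ℝ :=
  ((n - r + (n - m)).choose (n - r) : ℝ) / ((n + n).choose n : ℝ)

lemma rho_succ_right (r m n : ℕ) (h : r + m + 1 ≤ n) :
    rho r m n * (((n : ℝ) - m) / (2 * n - (r + m : ℝ))) = rho r (m + 1) n := by
  unfold rho
  have h1 := Nat.choose_mul_succ_eq (n - r + (n - (m + 1))) (n - r)
  rw [show n - r + (n - (m + 1)) + 1 = n - r + (n - m) by omega,
    show n - r + (n - m) - (n - r) = n - m by omega] at h1
  have h2 : ((n - r + (n - (m + 1))).choose (n - r) : ℝ) * (2 * n - (r + m : ℝ)) =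
      ((n - r + (n - m)).choose (n - r) : ℝ) * (n - m) := by
    have := congrArg (fun x : ℕ => (x : ℝ)) h1
    simp only [Nat.cast_mul] at this
    rw [Nat.cast_add (n - r) (n - m), Nat.cast_sub (by omega : r ≤ n),
      Nat.cast_sub (by omega : m ≤ n)] at this
    rw [← this]; ring
  have h3 : (2 * n - (r + m : ℝ)) ≠ 0 := by
    have : ((r + m + 1 : ℕ) : ℝ) ≤ n := by exact_mod_cast h
    push_cast at this
    have : (0 : ℝ) ≤ n := by positivity
    intro h; linarith
  rw [div_mul_div_comm, ← h2]
  field_simp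

lemma rho_succ_left (r n : ℕ) (h : r + 1 ≤ n) :
    rho r 0 n * (((n : ℝ) - r) / (2 * n - (r : ℝ))) = rho (r + 1) 0 n := by
  unfold rho
  have h1 := Nat.add_one_mul_choose_eq (n - (r + 1) + n) (n - (r + 1))
  rw [show n - (r + 1) + n + 1 = n - r + n by omega,
    show n - (r + 1) + 1 = n - r by omega] at h1
  have h2 : ((n - (r + 1) + (n - 0)).choose (n - (r + 1)) : ℝ) * (2 * n - (r : ℝ)) =
      ((n - r + (n - 0)).choose (n - r) : ℝ) * (n - r) := by
    have := congrArg (fun x : ℕ => (x : ℝ)) h1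
    simp only [Nat.cast_mul] at this
    rw [Nat.cast_add (n - r) n, Nat.cast_sub (by omega : r ≤ n)] at this
    simp only [Nat.sub_zero]
    rw [← this]; ring
  have h3 : (2 * n - (r : ℝ)) ≠ 0 := by
    have : ((r + 1 : ℕ) : ℝ) ≤ n := by exact_mod_cast h
    push_cast at this
    have : (0 : ℝ) ≤ n := by positivity
    intro h; linarith
  rw [div_mul_div_comm, ← h2]
  field_simp

lemma HE_rho_left (r : ℕ) : HE (rho r 0) ((1 / 2) ^ r) ((1 / 2) ^ r * (-(r * (r - 1) : ℝ) / 4)) := by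
  induction r with
  | zero =>
    have : rho 0 0 = fun _ => 1 := by
      funext n
      unfold rho
      simp only [Nat.sub_zero]
      apply div_self
      have := Nat.choose_pos (show n ≤ n + n by omega)
      positivity
    rw [this]
    simp [HE]
  | succ r ih =>
    have := (ih.mul (HE_factor r r)).congr' (g := rho (r + 1) 0) (by
      filter_upwards [eventually_ge_atTop (r + 1)] with n hn
      exact rho_succ_left r n hn)
    convert this using 1 <;> (push_cast; ring)

lemma HE_rho (r m : ℕ) : HE (rho r m) ((1 / 2) ^ (r + m))
    ((1 / 2) ^ (r + m) * (-(r * (r - 1) : ℝ) / 4 + r * m / 2 - m * (m - 1) / 4)) := by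
  induction m with
  | zero => simpa using HE_rho_left r
  | succ m ih =>
    have := (ih.mul (HE_factor m (r + m))).congr' (g := rho r (m + 1)) (by
      filter_upwards [eventually_ge_atTop (r + m + 1)] with n hn
      exact rho_succ_right r m n hn)
    convert this using 1 <;> (push_cast; ring)

lemma sum_choose_NC {l : ℕ} (hl : 1 ≤ l) (n r : ℕ) (hr : r ≤ n) (hrl : r * l ≤ n) :
    ((n : ℝ) + 1) * ∑ P : NCPart n, ((numBlocksOfSize l P).choose r : ℝ) =
      ((n + 1).choose r : ℝ) * ((n - r + (n - r * l)).choose (n - r) : ℝ) := by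
  rw [← sum_choose_count l n r hr hrl, ← sum_NC hl (fun k => (k.choose r : ℝ))]
  simp

lemma card_NC (n : ℕ) : ((n : ℝ) + 1) * (Fintype.card (NCPart n) : ℝ) = ((n + n).choose n : ℝ) := by
  have := sum_choose_NC (le_refl 1) n 0 (by omega) (by omega)
  simpa using this

lemma card_NC_pos (n : ℕ) : 0 < (Fintype.card (NCPart n) : ℝ) := by
  have h := card_NC n
  have h2 : (0 : ℝ) < ((n + n).choose n : ℝ) := by
    exact_mod_cast Nat.choose_pos (show n ≤ n + n by omega)
  rw [← h] at h2
  exact pos_of_mul_pos_right h2 (by positivity)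

lemma moment_eq {l : ℕ} (hl : 1 ≤ l) (n r : ℕ) (hr : r ≤ n) (hrl : r * l ≤ n) :
    (∑ P : NCPart n, ((numBlocksOfSize l P).choose r : ℝ)) / (Fintype.card (NCPart n) : ℝ) =
      ((n + 1).choose r : ℝ) * rho r (r * l) n := by
  have h1 := sum_choose_NC hl n r hr hrl
  have h2 := card_NC n
  have h3 := card_NC_pos n
  unfold rho
  rw [← mul_div_assoc, ← h1, ← h2]
  have : (n : ℝ) + 1 ≠ 0 := by positivity
  field_simp

lemma mean_eq {l : ℕ} (hl : 1 ≤ l) (n : ℕ) (hn : 1 + l ≤ n) :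
    meanBlocksOfSize l n = (n + 1) * rho 1 l n := by
  have := moment_eq hl n 1 (by omega) (by omega)
  simp only [Nat.choose_one_right, one_mul] at this
  unfold meanBlocksOfSize
  rw [this]; push_cast; ring

lemma var_eq {l : ℕ} (hl : 1 ≤ l) (n : ℕ) (hn : 2 + 2 * l ≤ n) :
    varBlocksOfSize l n = (n + 1) * n * rho 2 (2 * l) n + (n + 1) * rho 1 l n
      - ((n + 1) * rho 1 l n) ^ 2 := by
  have h2 := moment_eq hl n 2 (by omega) (by omega)
  have h1 := mean_eq hl n (by omega)
  unfold varBlocksOfSize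
  have e : ∑ P : NCPart n, (numBlocksOfSize l P : ℝ) ^ 2 =
      2 * (∑ P : NCPart n, ((numBlocksOfSize l P).choose 2 : ℝ)) +
        ∑ P : NCPart n, (numBlocksOfSize l P : ℝ) := by
    rw [Finset.mul_sum, ← Finset.sum_add_distrib]
    apply Finset.sum_congr rfl
    intro P _
    rw [Nat.cast_choose_two]; ring
  rw [e, add_div, mul_div_assoc, h2, Nat.cast_choose_two]
  unfold meanBlocksOfSize at h1
  rw [h1]
  unfold meanBlocksOfSize
  rw [h1]
  push_cast
  ring

/-- limiting variance -/
noncomputable def sig2 (l : ℕ) : ℝ :=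
  (1 / 2) ^ (l + 1) * (1 - (1 / 2) ^ (l + 1)) - ((1 / 2) ^ (l + 1) * (l - 1)) ^ 2 / 2

lemma sig2_pos (l : ℕ) : 0 < sig2 l := by
  have key : (1 : ℝ) + ((l : ℝ) - 1) ^ 2 / 2 < 2 ^ (l + 1) := by
    induction l with
    | zero => norm_num
    | succ l ih =>
      have h : ((l : ℝ)) + 1 ≤ 2 ^ l := by
        have : l + 1 ≤ 2 ^ l := Nat.lt_two_pow_self
        exact_mod_cast this
      rw [pow_succ (2 : ℝ)] at ih
      rw [pow_succ (2 : ℝ), pow_succ (2 : ℝ)]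
      push_cast
      nlinarith [sq_nonneg ((l : ℝ) - 2)]
  have e : sig2 l = (1 / 2) ^ (l + 1) * ((1 / 2) ^ (l + 1)) *
      (2 ^ (l + 1) - (1 + ((l : ℝ) - 1) ^ 2 / 2)) := by
    have : ((1 : ℝ) / 2) ^ (l + 1) * 2 ^ (l + 1) = 1 := by
      rw [← mul_pow]; norm_num
    unfold sig2
    linear_combination (-((1 : ℝ) / 2) ^ (l + 1)) * this
  rw [e]
  have : 0 < 2 ^ (l + 1) - (1 + ((l : ℝ) - 1) ^ 2 / 2) := by linarith
  positivity

lemma mean_asymp {l : ℕ} (hl : 1 ≤ l) :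
    Tendsto (fun n : ℕ => (meanBlocksOfSize l n - (n + 1) * (1 / 2) ^ (l + 1)) / √((n : ℝ) + 1))
      atTop (𝓝 0) := by
  have h := HE_rho 1 l
  have h1 : Tendsto (fun n : ℕ => (n : ℝ) * (rho 1 l n - (1 / 2) ^ (1 + l)) +
      (rho 1 l n - (1 / 2) ^ (1 + l))) atTop (𝓝 _) := Tendsto.add h (h.tendsto.sub_const _)
  have h2 : Tendsto (fun n : ℕ => √((n : ℝ) + 1)) atTop atTop :=
    Real.tendsto_sqrt_atTop.comp (tendsto_atTop_add_const_right _ _ tendsto_natCast_atTop_atTop)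
  refine (h1.div_atTop h2).congr' ?_
  filter_upwards [eventually_ge_atTop (1 + l)] with n hn
  rw [mean_eq hl n hn, add_comm 1 l]
  congr 1
  ring

lemma var_asymp {l : ℕ} (hl : 1 ≤ l) :
    Tendsto (fun n : ℕ => varBlocksOfSize l n / ((n : ℝ) + 1)) atTop (𝓝 (sig2 l)) := by
  have h1 := HE_rho 1 l
  have h2 := HE_rho 2 (2 * l)
  have h11 := h1.mul h1
  have hh : Tendsto (fun n : ℕ => (n : ℝ) * (rho 2 (2 * l) n - (1 / 2) ^ (2 + 2 * l)) -
      (n : ℝ) * (rho 1 l n * rho 1 l n - (1 / 2) ^ (1 + l) * (1 / 2) ^ (1 + l)) +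
      rho 1 l n - rho 1 l n * rho 1 l n) atTop (𝓝 _) :=
    ((Tendsto.sub h2 h11).add h1.tendsto).sub h11.tendsto
  have hlim : ((1 : ℝ) / 2) ^ (2 + 2 * l) *
        (-((2 : ℕ) * ((2 : ℕ) - 1) : ℝ) / 4 + (2 : ℕ) * (2 * l : ℕ) / 2 - (2 * l : ℕ) * ((2 * l : ℕ) - 1) / 4)
      - ((1 / 2) ^ (1 + l) * (-((1 : ℕ) * ((1 : ℕ) - 1) : ℝ) / 4 + (1 : ℕ) * l / 2 - l * (l - 1) / 4) * (1 / 2) ^ (1 + l)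
        + (1 / 2) ^ (1 + l) * ((1 / 2) ^ (1 + l) * (-((1 : ℕ) * ((1 : ℕ) - 1) : ℝ) / 4 + (1 : ℕ) * l / 2 - l * (l - 1) / 4)))
      + (1 / 2) ^ (1 + l) - (1 / 2) ^ (1 + l) * (1 / 2) ^ (1 + l) = sig2 l := by
    unfold sig2
    rw [show 2 + 2 * l = (l + 1) + (l + 1) by ring, pow_add (1 / 2) (l + 1) (l + 1), add_comm 1 l]
    push_cast
    ring
  rw [hlim] at hh
  refine hh.congr' ?_
  filter_upwards [eventually_ge_atTop (2 + 2 * l)] with n hn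
  rw [var_eq hl n hn]
  have : (n : ℝ) + 1 ≠ 0 := by positivity
  rw [show 2 + 2 * l = (1 + l) + (1 + l) by ring, pow_add (1 / 2) (1 + l) (1 + l)]
  field_simp
  ring

end NCCLT

namespace NCCLT

open Finset Filter Topology Complex MeasureTheory

lemma integral_exp_int (n : ℤ) :
    ∫ θ in (-Real.pi)..Real.pi, cexp (-(n : ℂ) * θ * I) = if n = 0 then 2 * (Real.pi : ℂ) else 0 := by
  split_ifs with h
  · subst h
    simp
    ring
  · have hc : -(n : ℂ) * I ≠ 0 := by
      simp [h]
    have : ∀ θ : ℝ, cexp (-(n : ℂ) * θ * I) = cexp (-(n : ℂ) * I * θ) := fun θ => by ring_nf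
    simp_rw [this]
    rw [integral_exp_mul_complex hc]
    have : cexp (-(n : ℂ) * I * (Real.pi : ℝ)) = cexp (-(n : ℂ) * I * ((-Real.pi : ℝ) : ℂ)) := by
      rw [Complex.exp_eq_exp_iff_exists_int]
      exact ⟨-n, by push_cast; ring⟩
    rw [this]; simp

/-- The Fourier series with coefficients `w`. -/
noncomputable def fser (w : ℕ → ℂ) (θ : ℝ) : ℂ := ∑' j : ℕ, w j * cexp (j * θ * I)

lemma norm_term (w : ℕ → ℂ) (θ : ℝ) (j : ℕ) : ‖w j * cexp (j * θ * I)‖ = ‖w j‖ := by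
  rw [norm_mul, show (j : ℂ) * θ * I = ((j * θ : ℝ) : ℂ) * I by push_cast; ring,
    Complex.norm_exp_ofReal_mul_I, mul_one]

lemma summable_fser {w : ℕ → ℂ} (hw : Summable fun j => ‖w j‖) (θ : ℝ) :
    Summable fun j : ℕ => w j * cexp (j * θ * I) := by
  apply Summable.of_norm
  simpa only [norm_term] using hw

lemma continuous_fser {w : ℕ → ℂ} (hw : Summable fun j => ‖w j‖) : Continuous (fser w) := by
  unfold fser
  refine continuous_tsum (fun j => by fun_prop) hw fun j θ => (norm_term w θ j).le

lemma norm_fser_le {w : ℕ → ℂ} (hw : Summable fun j => ‖w j‖) (θ : ℝ) :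
    ‖fser w θ‖ ≤ ∑' j, ‖w j‖ := by
  unfold fser
  refine (norm_tsum_le_tsum_norm ?_).trans_eq ?_
  · simpa only [norm_term] using hw
  · simp only [norm_term]

lemma fourier_coeff {w : ℕ → ℂ} (hw : Summable fun j => ‖w j‖) (m : ℕ) : ∀ n : ℤ,
    ∫ θ in (-Real.pi)..Real.pi, fser w θ ^ m * cexp (-(n : ℂ) * θ * I) =
      if 0 ≤ n then 2 * (Real.pi : ℂ) * PowerSeries.coeff n.toNat ((PowerSeries.mk w) ^ m) else 0 := by
  induction m with
  | zero =>
    intro n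
    simp only [pow_zero, one_mul, integral_exp_int, PowerSeries.coeff_one]
    split_ifs <;> first | omega | simp
  | succ m ih =>
    intro n
    have hcont := continuous_fser hw
    have e1 : ∀ θ : ℝ, fser w θ ^ (m + 1) * cexp (-(n : ℂ) * θ * I) =
        ∑' j : ℕ, w j * (fser w θ ^ m * cexp (-((n - j : ℤ) : ℂ) * θ * I)) := by
      intro θ
      rw [pow_succ, mul_assoc, mul_comm (fser w θ), ← mul_assoc]
      conv_lhs => rw [show fser w θ = ∑' j : ℕ, w j * cexp (j * θ * I) from rfl]
      rw [← tsum_mul_left]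
      apply tsum_congr
      intro j
      have : cexp (-((n - j : ℤ) : ℂ) * θ * I) = cexp (-(n : ℂ) * θ * I) * cexp (j * θ * I) := by
        rw [← Complex.exp_add]; congr 1; push_cast; ring
      rw [this]
      simp only [fser]
      ring
    have hs : HasSum (fun j : ℕ => ∫ θ in (-Real.pi)..Real.pi,
        w j * (fser w θ ^ m * cexp (-((n - j : ℤ) : ℂ) * θ * I)))
        (∫ θ in (-Real.pi)..Real.pi, ∑' j : ℕ, w j * (fser w θ ^ m * cexp (-((n - j : ℤ) : ℂ) * θ * I))) := by
      have hb : ∀ (θ : ℝ) (j : ℕ), ‖w j * (fser w θ ^ m * cexp (-((n - j : ℤ) : ℂ) * θ * I))‖ ≤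
          ‖w j‖ * (∑' j, ‖w j‖) ^ m := by
        intro θ j
        rw [norm_mul, norm_mul, show (-((n - j : ℤ) : ℂ) * θ * I) = ((-(n - j : ℤ) * θ : ℝ) : ℂ) * I by
          push_cast; ring, Complex.norm_exp_ofReal_mul_I, mul_one, norm_pow]
        gcongr
        exact norm_fser_le hw θ
      apply intervalIntegral.hasSum_integral_of_dominated_convergence
        (fun j _ => ‖w j‖ * (∑' j, ‖w j‖) ^ m)
      · intro j
        exact (by fun_prop : Continuous fun θ : ℝ =>
          w j * (fser w θ ^ m * cexp (-((n - j : ℤ) : ℂ) * θ * I))).aestronglyMeasurable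
      · intro j
        exact Eventually.of_forall fun θ _ => hb θ j
      · exact Eventually.of_forall fun θ _ => hw.mul_right _
      · exact intervalIntegrable_const
      · refine Eventually.of_forall fun θ _ => Summable.hasSum ?_
        exact Summable.of_norm_bounded (hw.mul_right _) (hb θ)
    simp_rw [e1]
    rw [← hs.tsum_eq]
    simp_rw [intervalIntegral.integral_const_mul, ih]
    split_ifs with hn
    · obtain ⟨N, rfl⟩ := Int.eq_ofNat_of_zero_le hn
      rw [tsum_eq_sum (s := range (N + 1))]
      · rw [pow_succ', PowerSeries.coeff_mul, Finset.Nat.sum_antidiagonal_eq_sum_range_succ_mk,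
          Finset.mul_sum]
        apply Finset.sum_congr rfl
        intro j hj
        have hj : j ≤ N := by simp at hj; omega
        rw [if_pos (by omega), PowerSeries.coeff_mk]
        rw [show ((N : ℤ) - j).toNat = N - j by omega]
        simp
        ring
      · intro j hj
        have hj : N < j := by simp at hj; omega
        rw [if_neg (by omega), mul_zero]
    · convert tsum_zero with j
      rw [if_neg (by omega), mul_zero]

/-- tilted geometric weights -/
noncomputable def wt (l : ℕ) (τ : ℝ) (j : ℕ) : ℂ :=
  (1 / 2) ^ (j + 1) * (if j = l then cexp (τ * I) else 1)

lemma norm_wt (l : ℕ) (τ : ℝ) (j : ℕ) : ‖wt l τ j‖ = (1 / 2) ^ (j + 1) := by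
  unfold wt
  split_ifs <;> simp [Complex.norm_exp_ofReal_mul_I]

lemma hasSum_half : HasSum (fun j : ℕ => ((1 : ℝ) / 2) ^ (j + 1)) 1 := by
  have e : (fun j : ℕ => ((1 : ℝ) / 2) ^ (j + 1)) = fun j => 1 / 2 * (1 / 2) ^ j := by
    funext j; rw [pow_succ']
  have h := hasSum_geometric_two.mul_left (1 / 2 : ℝ)
  rw [show (1 / 2 : ℝ) * 2 = 1 by norm_num] at h
  rw [e]
  exact h

lemma summable_wt (l : ℕ) (τ : ℝ) : Summable fun j => ‖wt l τ j‖ := by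
  simp only [norm_wt]
  exact hasSum_half.summable

/-- characteristic sums -/
lemma char_sum {l : ℕ} (hl : 1 ≤ l) (n : ℕ) (τ : ℝ) :
    ∫ θ in (-Real.pi)..Real.pi, fser (wt l τ) θ ^ (n + 1) * cexp (-(n : ℂ) * θ * I) =
      (2 * (Real.pi : ℂ) * (1 / 2) ^ (n + (n + 1)) * (n + 1)) *
        ∑ P : NCPart n, cexp (τ * (numBlocksOfSize l P : ℝ) * I) := by
  have h := fourier_coeff (summable_wt l τ) (n + 1) n
  rw [if_pos (by omega)] at h
  simp only [Int.cast_natCast, Int.toNat_natCast] at h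
  rw [h, ← sum_tuple_prod]
  have h2 : ∀ a ∈ Finset.Nat.antidiagonalTuple (n + 1) n, ∏ i, wt l τ (a i) =
      (1 / 2) ^ (n + (n + 1)) * cexp (τ * ((#{i | a i = l} : ℕ) : ℝ) * I) := by
    intro a ha
    rw [Finset.Nat.mem_antidiagonalTuple] at ha
    unfold wt
    rw [Finset.prod_mul_distrib, prod_ite_count, Finset.prod_pow_eq_pow_sum,
      Finset.sum_add_distrib, ha]
    rw [← Complex.exp_nat_mul]
    simp only [sum_const, card_univ, Fintype.card_fin, smul_eq_mul, mul_one]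
    congr 2
    push_cast; ring
  rw [Finset.sum_congr rfl h2, ← Finset.mul_sum,
    ← sum_NC hl (fun k => cexp (τ * ((k : ℕ) : ℝ) * I))]
  rw [nsmul_eq_mul]
  push_cast
  ring

lemma char_ratio {l : ℕ} (hl : 1 ≤ l) (n : ℕ) (τ : ℝ) :
    (∑ P : NCPart n, cexp (τ * (numBlocksOfSize l P : ℝ) * I)) / (Fintype.card (NCPart n) : ℂ) =
      (∫ θ in (-Real.pi)..Real.pi, fser (wt l τ) θ ^ (n + 1) * cexp (-(n : ℂ) * θ * I)) /
      (∫ θ in (-Real.pi)..Real.pi, fser (wt l 0) θ ^ (n + 1) * cexp (-(n : ℂ) * θ * I)) := by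
  rw [char_sum hl, char_sum hl]
  simp only [ofReal_zero, zero_mul, Complex.exp_zero, sum_const, card_univ, nsmul_eq_mul, mul_one]
  rw [mul_div_mul_left]
  have : (Real.pi : ℂ) ≠ 0 := by exact_mod_cast Real.pi_ne_zero
  have h2 : ((n : ℂ) + 1) ≠ 0 := by exact_mod_cast Nat.succ_ne_zero n
  have h3 : ((1 : ℂ) / 2) ^ (n + (n + 1)) ≠ 0 := pow_ne_zero _ (by norm_num)
  exact mul_ne_zero (mul_ne_zero (mul_ne_zero two_ne_zero this) h3) h2

lemma cos_bound {θ : ℝ} (h : |θ| ≤ Real.pi) : 2 * θ ^ 2 / Real.pi ^ 2 ≤ 1 - Real.cos θ := by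
  have h1 : Real.cos θ = 1 - 2 * Real.sin (θ / 2) ^ 2 := by
    have := Real.cos_two_mul' (θ / 2)
    rw [show 2 * (θ / 2) = θ by ring] at this
    have h2 := Real.sin_sq_add_cos_sq (θ / 2)
    linarith
  have h2 : |θ / 2| ≤ Real.pi / 2 := by
    rw [abs_div, abs_two]; linarith
  have h3 := Real.mul_abs_le_abs_sin h2
  have h4 : (2 / Real.pi * |θ / 2|) ^ 2 ≤ |Real.sin (θ / 2)| ^ 2 := by
    have := Real.pi_pos
    gcongr
  rw [mul_pow, sq_abs, sq_abs] at h4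
  have e : (2 / Real.pi) ^ 2 * (θ / 2) ^ 2 = θ ^ 2 / Real.pi ^ 2 := by ring
  rw [e] at h4
  rw [h1, mul_div_assoc]
  linarith

lemma fser_bound (l : ℕ) (τ θ : ℝ) (h : |θ| ≤ Real.pi) :
    ‖fser (wt l τ) θ‖ ≤ Real.exp (-((1 / 2) ^ (l + 1) / (6 * Real.pi ^ 2)) * θ ^ 2) := by
  set f : ℕ → ℂ := fun j => wt l τ j * cexp (j * θ * I) with hf
  have hs : Summable f := summable_fser (summable_wt l τ) θ
  have hn : ∀ j, ‖f j‖ = (1 / 2) ^ (j + 1) := fun j => by rw [hf]; simp only [norm_term, norm_wt]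
  have h1 : fser (wt l τ) θ = ∑ j ∈ range (l + 1), f j + (f (l + 1) + f (l + 2)) +
      ∑' j, f (j + (l + 3)) := by
    have := hs.sum_add_tsum_nat_add (l + 3)
    rw [show fser (wt l τ) θ = ∑' j, f j from rfl, ← this, sum_range_succ, sum_range_succ]
    ring
  have hR := hasSum_half.summable.sum_add_tsum_nat_add (l + 3)
  rw [hasSum_half.tsum_eq, sum_range_succ, sum_range_succ] at hR
  have h2 : ‖∑ j ∈ range (l + 1), f j‖ ≤ ∑ j ∈ range (l + 1), (1 / 2 : ℝ) ^ (j + 1) :=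
    norm_sum_le_of_le _ fun j _ => (hn j).le
  have h3 : ‖∑' j, f (j + (l + 3))‖ ≤ ∑' j, (1 / 2 : ℝ) ^ (j + (l + 3) + 1) := by
    refine (norm_tsum_le_tsum_norm ?_).trans_eq ?_
    · simp only [hn]
      exact (summable_nat_add_iff (f := fun j : ℕ => ((1 : ℝ) / 2) ^ (j + 1)) (l + 3)).2
        hasSum_half.summable
    · simp only [hn]
  have h4 : ‖f (l + 1) + f (l + 2)‖ ≤
      (1 / 2) ^ (l + 2) * (3 / 2 - (1 - Real.cos θ) / 3) := by
    have e : f (l + 1) + f (l + 2) =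
        (((1 / 2) ^ (l + 2) : ℝ) : ℂ) * cexp (((l + 1) * θ : ℝ) * I) * (1 + cexp (θ * I) / 2) := by
      simp only [f, wt]
      rw [if_neg (by omega), if_neg (by omega)]
      have : cexp (((l + 2 : ℕ) : ℂ) * θ * I) = cexp (((l + 1) * θ : ℝ) * I) * cexp (θ * I) := by
        rw [← Complex.exp_add]; congr 1; push_cast; ring
      rw [this]
      have : cexp (((l + 1 : ℕ) : ℂ) * θ * I) = cexp (((l + 1) * θ : ℝ) * I) := by
        congr 1; push_cast; ring
      rw [this]
      push_cast
      ring
    rw [e, norm_mul, norm_mul, Complex.norm_exp_ofReal_mul_I, mul_one, Complex.norm_real,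
      Real.norm_of_nonneg (by positivity)]
    gcongr
    have hc := Real.neg_one_le_cos θ
    refine (sq_le_sq₀ (norm_nonneg _) (by linarith)).1 ?_
    have : ‖1 + cexp (θ * I) / 2‖ ^ 2 = 5 / 4 + Real.cos θ := by
      rw [← Complex.normSq_eq_norm_sq, Complex.normSq_apply]
      rw [Complex.exp_mul_I, ← Complex.ofReal_cos, ← Complex.ofReal_sin]
      have := Real.sin_sq_add_cos_sq θ
      simp only [add_re, one_re, div_ofNat_re, mul_re, ofReal_re, ofReal_im, I_re, I_im, mul_zero,
        mul_one, sub_zero, add_im, one_im, div_ofNat_im, mul_im, add_zero, zero_add]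
      linear_combination (1/4) * this
    rw [this]
    nlinarith [sq_nonneg (1 - Real.cos θ)]
  have h5 : ‖fser (wt l τ) θ‖ ≤ 1 - (1 / 2) ^ (l + 2) * ((1 - Real.cos θ) / 3) := by
    rw [h1]
    refine (norm_add₃_le).trans ?_
    have : (1 / 2 : ℝ) ^ (l + 1 + 1) + (1 / 2) ^ (l + 2 + 1) = (1 / 2) ^ (l + 2) * (3 / 2) := by
      ring
    nlinarith
  have h6 := cos_bound h
  refine h5.trans (le_trans ?_ (Real.add_one_le_exp _))
  have h7 : (0 : ℝ) < (1 / 2) ^ (l + 2) := by positivity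
  have h8 := mul_le_mul_of_nonneg_left h6 h7.le
  have h9 : ((1 : ℝ) / 2) ^ (l + 1) / (6 * Real.pi ^ 2) * θ ^ 2 =
     (1 / 2) ^ (l + 2) * (2 * θ ^ 2 / Real.pi ^ 2) / 6 := by
    rw [pow_succ _ (l + 1)]
    field_simp
    try ring
  have h10 : 0 ≤ (1 / 2) ^ (l + 2) * (1 - Real.cos θ) :=
    mul_nonneg h7.le (by linarith [Real.cos_le_one θ])
  rw [neg_mul, h9]
  nlinarith

end NCCLT

namespace NCCLT

open Finset Filter Topology Complex MeasureTheory

lemma hasSum_half_one : HasSum (fun j : ℕ => ((1 : ℝ) / 2) ^ (j + 1) * j) 1 := by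
  have h := (hasSum_choose_mul_geometric_of_norm_lt_one (𝕜 := ℝ) 1 (r := 1 / 2)
    (by norm_num)).mul_left (1 / 2 : ℝ)
  have h2 := h.sub hasSum_half
  norm_num at h2
  have e : (fun j : ℕ => ((1 : ℝ) / 2) ^ (j + 1) * j) =
      fun b : ℕ => 1 / 2 * (((b : ℝ) + 1) * (1 / 2) ^ b) - (1 / 2) ^ (b + 1) := by
    funext j; ring
  rw [e]
  exact h2

lemma hasSum_half_two : HasSum (fun j : ℕ => ((1 : ℝ) / 2) ^ (j + 1) * (j : ℝ) ^ 2) 3 := by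
  have h := (hasSum_choose_mul_geometric_of_norm_lt_one (𝕜 := ℝ) 2 (r := 1 / 2)
    (by norm_num))
  have h2 := (h.sub (hasSum_half_one.mul_left 3)).sub (hasSum_half.mul_left 2)
  rw [show (1 : ℝ) / (1 - 1 / 2) ^ (2 + 1) - 3 * 1 - 2 * 1 = 3 by norm_num] at h2
  have e : (fun j : ℕ => ((1 : ℝ) / 2) ^ (j + 1) * (j : ℝ) ^ 2) =
      fun b : ℕ => ((b + 2).choose 2 : ℝ) * (1 / 2) ^ b - 3 * ((1 / 2) ^ (b + 1) * b) -
        2 * (1 / 2) ^ (b + 1) := by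
    funext j
    rw [Nat.cast_choose_two]
    push_cast
    ring
  rw [e]
  exact h2

lemma hasSum_half_ind (l : ℕ) (v : ℝ) :
    HasSum (fun j : ℕ => ((1 : ℝ) / 2) ^ (j + 1) * (if j = l then v else 0))
      ((1 / 2) ^ (l + 1) * v) := by
  have e : (fun j : ℕ => ((1 : ℝ) / 2) ^ (j + 1) * (if j = l then v else 0)) =
      fun j => if j = l then (1 / 2) ^ (l + 1) * v else 0 := by
    funext j
    split_ifs with h
    · rw [h]
    · simp
  rw [e]
  exact hasSum_ite_eq l _

/-- the success probability one half -/
noncomputable def halfI : unitInterval := ⟨1 / 2, by norm_num, by norm_num⟩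

lemma halfI_ne : halfI ≠ 0 := by
  intro h
  have := congrArg Subtype.val h
  norm_num [halfI] at this

lemma integral_geo {E : Type*} [NormedAddCommGroup E] [NormedSpace ℝ E] [FiniteDimensional ℝ E]
    (f : ℕ → E) :
    ∫ j, f j ∂geometricMeasure halfI = ∑' j : ℕ, ((1 / 2 : ℝ) ^ (j + 1)) • f j := by
  rw [integral_geometricMeasure halfI_ne]
  apply tsum_congr
  intro j
  congr 1
  simp only [halfI]
  rw [pow_succ]
  norm_num

/-- the centered linear combination -/
noncomputable def zf (l : ℕ) (t s : ℝ) (j : ℕ) : ℝ :=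
  t * ((if j = l then 1 else 0) - (1 / 2) ^ (l + 1)) + s * (j - 1)

/-- its variance -/
noncomputable def qf (l : ℕ) (t s : ℝ) : ℝ :=
  (1 / 2) ^ (l + 1) * (1 - (1 / 2) ^ (l + 1)) * t ^ 2 + 2 * t * s * (1 / 2) ^ (l + 1) * (l - 1) +
    2 * s ^ 2

lemma qf_eq (l : ℕ) (t s : ℝ) :
    qf l t s = sig2 l * t ^ 2 + 2 * (s + (1 / 2) ^ (l + 1) * (l - 1) * t / 2) ^ 2 := by
  unfold qf sig2
  ring

lemma integral_zf (l : ℕ) (t s : ℝ) : ∫ j, zf l t s j ∂geometricMeasure halfI = 0 := by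
  rw [integral_geo]
  have h := (((hasSum_half_ind l 1).sub (hasSum_half.mul_left ((1 / 2) ^ (l + 1)))).mul_left t).add
    ((hasSum_half_one.sub hasSum_half).mul_left s)
  rw [show t * ((1 / 2 : ℝ) ^ (l + 1) * 1 - (1 / 2) ^ (l + 1) * 1) + s * (1 - 1) = 0 by ring] at h
  rw [← h.tsum_eq]
  apply tsum_congr
  intro j
  simp only [zf, smul_eq_mul]
  ring

lemma integral_zf_sq (l : ℕ) (t s : ℝ) :
    ∫ j, (zf l t s j) ^ 2 ∂geometricMeasure halfI = qf l t s := by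
  rw [integral_geo]
  have h := ((((hasSum_half_ind l (t ^ 2 * (1 - 2 * (1 / 2) ^ (l + 1)) + 2 * t * s * (l - 1))).add
    (hasSum_half.mul_left (t ^ 2 * ((1 / 2) ^ (l + 1)) ^ 2))).sub
    ((hasSum_half_one.sub hasSum_half).mul_left (2 * t * s * (1 / 2) ^ (l + 1)))).add
    (((hasSum_half_two.sub (hasSum_half_one.mul_left 2)).add hasSum_half).mul_left (s ^ 2)))
  refine Eq.trans (Eq.trans (tsum_congr fun j => ?_) h.tsum_eq) ?_
  · simp only [zf, smul_eq_mul]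
    split_ifs with hj
    · subst hj; ring
    · ring
  · unfold qf
    ring

lemma pointwise (l : ℕ) (t s : ℝ) (hQ : 0 < qf l t s) :
    Tendsto (fun n : ℕ => (cexp (-(((1 / 2) ^ (l + 1) * t + s) / √((n : ℝ) + 1) : ℝ) * I) *
      fser (wt l (t / √((n : ℝ) + 1))) (s / √((n : ℝ) + 1))) ^ (n + 1)) atTop
      (𝓝 (cexp (-(qf l t s : ℝ) / 2))) := by
  set Q := qf l t s with hQd
  have hs : 0 < √Q := Real.sqrt_pos.2 hQ
  have key := tendsto_charFun_inv_sqrt_mul_pow (P := geometricMeasure halfI)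
    (X := fun j => (√Q)⁻¹ * zf l t s j) (Measurable.of_discrete.aemeasurable)
    (by rw [integral_const_mul, integral_zf, mul_zero])
    (by
      have : ((fun j => (√Q)⁻¹ * zf l t s j) ^ 2 : ℕ → ℝ) = fun j => Q⁻¹ * (zf l t s j) ^ 2 := by
        funext j
        simp only [Pi.pow_apply]
        rw [mul_pow, inv_pow, Real.sq_sqrt hQ.le]
      rw [this, integral_const_mul, integral_zf_sq, inv_mul_cancel₀ hQ.ne'])
    (√Q)
  have key2 := key.comp (tendsto_add_atTop_nat 1)
  have e : cexp (-(Q : ℝ) / 2) = ((Real.exp (-(√Q) ^ 2 / 2) : ℝ) : ℂ) := by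
    rw [Real.sq_sqrt hQ.le]; push_cast; rfl
  have e' : (-((√Q : ℝ) : ℂ) ^ 2 / 2) = -(Q : ℂ) / 2 := by
    rw [← Complex.ofReal_pow, Real.sq_sqrt hQ.le]
  rw [e'] at key2
  refine key2.congr ?_
  intro n
  simp only [Function.comp]
  congr 1
  rw [charFun_apply_real, integral_map Measurable.of_discrete.aemeasurable (by fun_prop),
    integral_geo, fser, ← tsum_mul_left]
  apply tsum_congr
  intro j
  have hn : (0 : ℝ) < √((n : ℝ) + 1) := by positivity
  have e2 : (((√((n + 1 : ℕ) : ℝ))⁻¹ * √Q : ℝ) : ℂ) * (((√Q)⁻¹ * zf l t s j : ℝ) : ℂ) =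
      ((zf l t s j / √((n : ℝ) + 1) : ℝ) : ℂ) := by
    rw [← ofReal_mul]
    congr 1
    push_cast
    field_simp
  rw [e2]
  simp only [wt, real_smul]
  have e3 : cexp ((zf l t s j / √((n : ℝ) + 1) : ℝ) * I) =
      cexp (-(((1 / 2) ^ (l + 1) * t + s) / √((n : ℝ) + 1) : ℝ) * I) *
       ((if j = l then cexp ((t / √((n : ℝ) + 1) : ℝ) * I) else 1) *
         cexp (j * (s / √((n : ℝ) + 1) : ℝ) * I)) := by
    unfold zf
    split_ifs with hj
    · rw [← Complex.exp_add, ← Complex.exp_add]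
      congr 1
      push_cast
      ring
    · rw [one_mul, ← Complex.exp_add]
      congr 1
      push_cast
      ring
  rw [e3]
  push_cast
  ring

end NCCLT

namespace NCCLT

open Finset Filter Topology Complex MeasureTheory

/-- the integrand after rescaling -/
noncomputable def gg (l : ℕ) (t : ℝ) (n : ℕ) (s : ℝ) : ℂ :=
  (cexp (-(((1 / 2) ^ (l + 1) * t + s) / √((n : ℝ) + 1) : ℝ) * I) *
      fser (wt l (t / √((n : ℝ) + 1))) (s / √((n : ℝ) + 1))) ^ (n + 1) *
    cexp ((s / √((n : ℝ) + 1) : ℝ) * I)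

/-- the Fourier integral -/
noncomputable def jj (l : ℕ) (t : ℝ) (n : ℕ) : ℂ :=
  ∫ θ in (-Real.pi)..Real.pi, fser (wt l (t / √((n : ℝ) + 1))) θ ^ (n + 1) *
    cexp (-(n : ℂ) * θ * I)

lemma jj_eq (l : ℕ) (t : ℝ) (n : ℕ) :
    (√((n : ℝ) + 1) : ℂ) * cexp (-((1 / 2) ^ (l + 1) * t * √((n : ℝ) + 1) : ℝ) * I) * jj l t n =
      ∫ s, (Set.Ioc (-(Real.pi * √((n : ℝ) + 1))) (Real.pi * √((n : ℝ) + 1))).indicator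
        (gg l t n) s := by
  have hn : (0 : ℝ) < √((n : ℝ) + 1) := by positivity
  set r := √((n : ℝ) + 1) with hr
  have hr2 : r * r = n + 1 := Real.mul_self_sqrt (by positivity)
  have hpi := Real.pi_pos
  rw [integral_indicator measurableSet_Ioc, ← intervalIntegral.integral_of_le (by nlinarith)]
  set G : ℝ → ℂ := fun θ => cexp (-((1 / 2) ^ (l + 1) * t * r : ℝ) * I) *
    (fser (wt l (t / r)) θ ^ (n + 1) * cexp (-(n : ℂ) * θ * I)) with hG
  have e : ∀ s, gg l t n s = G (s / r) := by
    intro s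
    simp only [gg, hG, ← hr]
    rw [mul_pow, ← Complex.exp_nat_mul]
    rw [mul_right_comm, ← Complex.exp_add, mul_left_comm (cexp _) (fser _ _ ^ _) (cexp _),
      ← Complex.exp_add, mul_comm (cexp _)]
    congr 2
    have hrc : (r : ℂ) ≠ 0 := by exact_mod_cast hn.ne'
    have hr3 : (r : ℂ) * r = n + 1 := by exact_mod_cast hr2
    push_cast
    rw [← hr3]
    have : (n : ℂ) = r * r - 1 := by rw [hr3]; ring
    rw [this]
    field_simp
    ring
  simp_rw [e]
  rw [intervalIntegral.integral_comp_div G hn.ne']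
  rw [neg_div, mul_div_assoc, div_self hn.ne', mul_one, hG, intervalIntegral.integral_const_mul]
  rw [real_smul, mul_assoc]
  rfl

lemma norm_gg_le (l : ℕ) (t : ℝ) (n : ℕ) (s : ℝ) (hs : |s| ≤ Real.pi * √((n : ℝ) + 1)) :
    ‖gg l t n s‖ ≤ Real.exp (-((1 / 2) ^ (l + 1) / (6 * Real.pi ^ 2)) * s ^ 2) := by
  have hn : (0 : ℝ) < √((n : ℝ) + 1) := by positivity
  unfold gg
  rw [norm_mul, norm_pow, norm_mul, Complex.norm_exp_ofReal_mul_I, mul_one, ← ofReal_neg,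
    Complex.norm_exp_ofReal_mul_I, one_mul]
  have h := fser_bound l (t / √((n : ℝ) + 1)) (s / √((n : ℝ) + 1)) (by
    rw [abs_div, abs_of_pos hn, div_le_iff₀ hn]; exact hs)
  refine (pow_le_pow_left₀ (norm_nonneg _) h _).trans_eq ?_
  rw [← Real.exp_nat_mul]
  congr 1
  rw [div_pow s, Real.sq_sqrt (by positivity)]
  push_cast
  field_simp

lemma continuous_gg (l : ℕ) (t : ℝ) (n : ℕ) : Continuous (gg l t n) := by
  unfold gg
  have := continuous_fser (summable_wt l (t / √((n : ℝ) + 1)))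
  fun_prop

lemma tendsto_sqrt_nat : Tendsto (fun n : ℕ => √((n : ℝ) + 1)) atTop atTop := by
  refine Real.tendsto_sqrt_atTop.comp ?_
  exact tendsto_atTop_add_const_right _ _ tendsto_natCast_atTop_atTop

lemma gg_lim (l : ℕ) (t : ℝ) :
    Tendsto (fun n : ℕ => ∫ s, (Set.Ioc (-(Real.pi * √((n : ℝ) + 1)))
        (Real.pi * √((n : ℝ) + 1))).indicator (gg l t n) s) atTop
      (𝓝 (∫ s : ℝ, cexp (-(qf l t s : ℝ) / 2))) := by
  have hpi := Real.pi_pos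
  apply tendsto_integral_of_dominated_convergence
    (fun s => Real.exp (-((1 / 2) ^ (l + 1) / (6 * Real.pi ^ 2)) * s ^ 2))
  · intro n
    exact ((continuous_gg l t n).aestronglyMeasurable).indicator measurableSet_Ioc
  · exact integrable_exp_neg_mul_sq (by positivity)
  · intro n
    refine Eventually.of_forall fun s => ?_
    by_cases hs : s ∈ Set.Ioc (-(Real.pi * √((n : ℝ) + 1))) (Real.pi * √((n : ℝ) + 1))
    · rw [Set.indicator_of_mem hs]
      exact norm_gg_le l t n s (abs_le.2 ⟨hs.1.le, hs.2⟩)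
    · rw [Set.indicator_of_notMem hs, norm_zero]
      positivity
  · have hae : ∀ᵐ s : ℝ, s ≠ -((1 / 2) ^ (l + 1) * (l - 1) * t / 2) := by
      simp [ae_iff]
    filter_upwards [hae] with s hs
    have hQ : 0 < qf l t s := by
      rw [qf_eq]
      have h1 := sig2_pos l
      have h2 : s + (1 / 2) ^ (l + 1) * (l - 1) * t / 2 ≠ 0 := fun h => hs (by linarith)
      positivity
    have h1 := pointwise l t s hQ
    have h2 : Tendsto (fun n : ℕ => cexp ((s / √((n : ℝ) + 1) : ℝ) * I)) atTop (𝓝 1) := by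
      have h3 : Tendsto (fun n : ℕ => s / √((n : ℝ) + 1)) atTop (𝓝 0) :=
        tendsto_sqrt_nat.const_div_atTop s
      have h4 : Continuous fun y : ℝ => cexp (y * I) := by fun_prop
      have := (h4.tendsto 0).comp h3
      simp only [ofReal_zero, zero_mul, Complex.exp_zero] at this
      exact this
    have h3 := h1.mul h2
    rw [mul_one] at h3
    refine h3.congr' ?_
    have h4 : ∀ᶠ n : ℕ in atTop, |s| / Real.pi < √((n : ℝ) + 1) :=
      tendsto_sqrt_nat.eventually_gt_atTop _
    filter_upwards [h4] with n hn
    rw [div_lt_iff₀ hpi] at hn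
    have := abs_lt.1 hn
    rw [Set.indicator_of_mem]
    · rfl
    · constructor <;> linarith

lemma gauss_int (l : ℕ) (t : ℝ) : ∫ s : ℝ, cexp (-(qf l t s : ℝ) / 2) =
    cexp (-(sig2 l * t ^ 2 / 2 : ℝ)) * ((√Real.pi : ℝ) : ℂ) := by
  have e : ∀ s : ℝ, cexp (-(qf l t s : ℝ) / 2) = cexp (-(sig2 l * t ^ 2 / 2 : ℝ)) *
      (fun y : ℝ => ((Real.exp (-1 * y ^ 2) : ℝ) : ℂ)) (s + (1 / 2) ^ (l + 1) * (l - 1) * t / 2) := by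
    intro s
    rw [qf_eq]
    simp only
    rw [Complex.ofReal_exp, ← Complex.exp_add]
    congr 1
    push_cast
    ring
  simp_rw [e]
  rw [integral_const_mul, integral_add_right_eq_self (fun y : ℝ => ((Real.exp (-1 * y ^ 2) : ℝ) : ℂ)),
    integral_complex_ofReal, integral_gaussian, div_one]

lemma jj_lim (l : ℕ) (t : ℝ) :
    Tendsto (fun n : ℕ => (√((n : ℝ) + 1) : ℂ) *
        cexp (-((1 / 2) ^ (l + 1) * t * √((n : ℝ) + 1) : ℝ) * I) * jj l t n) atTop
      (𝓝 (cexp (-(sig2 l * t ^ 2 / 2 : ℝ)) * ((√Real.pi : ℝ) : ℂ))) := by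
  simp_rw [jj_eq]
  rw [← gauss_int]
  exact gg_lim l t

lemma charfun_lim {l : ℕ} (hl : 1 ≤ l) (t : ℝ) :
    Tendsto (fun n : ℕ =>
      (∑ P : NCPart n, cexp ((t * (((numBlocksOfSize l P : ℝ) - (n + 1) * (1 / 2) ^ (l + 1)) /
          √((n : ℝ) + 1)) : ℝ) * I)) / (Fintype.card (NCPart n) : ℂ)) atTop
      (𝓝 (cexp (-(sig2 l * t ^ 2 / 2 : ℝ)))) := by
  have hpi : ((√Real.pi : ℝ) : ℂ) ≠ 0 := by
    exact_mod_cast (Real.sqrt_pos.2 Real.pi_pos).ne'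
  have h := (jj_lim l t).div (jj_lim l 0) (by
    exact mul_ne_zero (Complex.exp_ne_zero _) hpi)
  have e : cexp (-(sig2 l * t ^ 2 / 2 : ℝ)) * ((√Real.pi : ℝ) : ℂ) /
      (cexp (-(sig2 l * 0 ^ 2 / 2 : ℝ)) * ((√Real.pi : ℝ) : ℂ)) = cexp (-(sig2 l * t ^ 2 / 2 : ℝ)) := by
    rw [mul_div_mul_right _ _ hpi]
    simp
  rw [e] at h
  refine h.congr ?_
  intro n
  have hn : (0 : ℝ) < √((n : ℝ) + 1) := by positivity
  have hr2 : √((n : ℝ) + 1) * √((n : ℝ) + 1) = n + 1 := Real.mul_self_sqrt (by positivity)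
  simp only [Pi.div_apply]
  set r := √((n : ℝ) + 1) with hr
  have hrc : (r : ℂ) ≠ 0 := by exact_mod_cast hn.ne'
  have hr3 : (r : ℂ) * r = n + 1 := by exact_mod_cast hr2
  have e2 := char_ratio hl n (t / r)
  have e3 : jj l t n / jj l 0 n =
      (∑ P : NCPart n, cexp ((t / r : ℝ) * (numBlocksOfSize l P : ℝ) * I)) /
        (Fintype.card (NCPart n) : ℂ) := by
    unfold jj
    rw [← hr, zero_div]
    exact e2.symm
  have e4 : (r : ℂ) * cexp (-((1 / 2) ^ (l + 1) * t * r : ℝ) * I) * jj l t n /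
     ((r : ℂ) * cexp (-((1 / 2) ^ (l + 1) * 0 * r : ℝ) * I) * jj l 0 n) =
     cexp (-((1 / 2) ^ (l + 1) * t * r : ℝ) * I) * (jj l t n / jj l 0 n) := by
    rw [mul_zero, zero_mul, ofReal_zero, neg_zero, zero_mul, Complex.exp_zero, mul_one, mul_assoc,
      mul_div_mul_left _ _ hrc, mul_div_assoc]
  rw [e4, e3, ← mul_div_assoc, Finset.mul_sum]
  congr 1
  apply Finset.sum_congr rfl
  intro P _
  rw [← Complex.exp_add]
  congr 1
  push_cast
  rw [← hr3]
  field_simp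
  ring

end NCCLT

namespace NCCLT

open Finset Filter Topology Complex MeasureTheory

/-- the centered and normalized block count, shifted so that the event of interest is `≤ x` -/
noncomputable def yy (l : ℕ) (x : ℝ) (n : ℕ) (P : NCPart n) : ℝ :=
  ((numBlocksOfSize l P : ℝ) - (meanBlocksOfSize l n + x * √(varBlocksOfSize l n))) /
    (√(sig2 l) * √((n : ℝ) + 1)) + x

/-- its law -/
noncomputable def nu (l : ℕ) (x : ℝ) (n : ℕ) : Measure ℝ :=
  (Fintype.card (NCPart n) : ENNReal)⁻¹ • ∑ P : NCPart n, Measure.dirac (yy l x n P)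

lemma card_ne (n : ℕ) : (Fintype.card (NCPart n) : ENNReal) ≠ 0 := by
  have h := card_NC_pos n
  have h2 : 0 < Fintype.card (NCPart n) := by exact_mod_cast h
  exact_mod_cast h2.ne'

instance (l : ℕ) (x : ℝ) (n : ℕ) : IsProbabilityMeasure (nu l x n) := by
  constructor
  unfold nu
  simp only [Measure.smul_apply, Measure.coe_finsetSum, Finset.sum_apply, measure_univ, sum_const,
    card_univ, smul_eq_mul, nsmul_eq_mul, mul_one]
  exact ENNReal.inv_mul_cancel (card_ne n) (ENNReal.natCast_ne_top _)

lemma charFun_nu (l : ℕ) (x : ℝ) (n : ℕ) (t : ℝ) : charFun (nu l x n) t =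
    (∑ P : NCPart n, cexp (t * (yy l x n P : ℝ) * I)) / (Fintype.card (NCPart n) : ℂ) := by
  rw [charFun_apply_real]
  unfold nu
  rw [integral_smul_measure, integral_finsetSum_measure]
  · simp only [integral_dirac]
    rw [ENNReal.toReal_inv, ENNReal.toReal_natCast, real_smul]
    push_cast
    rw [div_eq_inv_mul]
  · intro P _
    apply integrable_dirac
    simp

lemma nu_Iic (l : ℕ) (x : ℝ) (n : ℕ) : (nu l x n (Set.Iic x)).toReal =
    (Nat.card {π : NCPart n // (numBlocksOfSize l π : ℝ) ≤
              meanBlocksOfSize l n + x * Real.sqrt (varBlocksOfSize l n)} : ℝ) /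
          (Fintype.card (NCPart n) : ℝ) := by
  classical
  have hs : 0 < √(sig2 l) * √((n : ℝ) + 1) := by
    have := Real.sqrt_pos.2 (sig2_pos l)
    positivity
  have hiff : ∀ P : NCPart n, yy l x n P ≤ x ↔ (numBlocksOfSize l P : ℝ) ≤
              meanBlocksOfSize l n + x * Real.sqrt (varBlocksOfSize l n) := by
    intro P
    unfold yy
    rw [add_le_iff_nonpos_left, div_le_iff₀ hs, zero_mul, sub_nonpos]
  unfold nu
  simp only [Measure.smul_apply, Measure.coe_finsetSum, Finset.sum_apply, smul_eq_mul,
    Measure.dirac_apply, Set.indicator_apply, Set.mem_Iic, hiff, Pi.one_apply]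
  rw [Finset.sum_boole, ENNReal.toReal_mul, ENNReal.toReal_inv, ENNReal.toReal_natCast,
    ENNReal.toReal_natCast, div_eq_inv_mul, Nat.card_eq_fintype_card, Fintype.card_subtype]

lemma charFun_nu_lim {l : ℕ} (hl : 1 ≤ l) (x t : ℝ) :
    Tendsto (fun n => charFun (nu l x n) t) atTop (𝓝 (charFun (gaussianReal 0 1) t)) := by
  have hs := Real.sqrt_pos.2 (sig2_pos l)
  have h1 := charfun_lim hl (t / √(sig2 l))
  have hm := mean_asymp hl
  have hv := (Real.continuous_sqrt.tendsto _).comp (var_asymp hl)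
  have ha : Tendsto (fun n : ℕ => t * (x - ((meanBlocksOfSize l n - (n + 1) * (1 / 2) ^ (l + 1)) /
      √((n : ℝ) + 1) + x * √(varBlocksOfSize l n / ((n : ℝ) + 1))) / √(sig2 l))) atTop (𝓝 0) := by
    have := ((tendsto_const_nhds (x := x)).sub
      ((hm.add (hv.const_mul x)).div_const (√(sig2 l)))).const_mul t
    rw [show t * (x - (0 + x * √(sig2 l)) / √(sig2 l)) = 0 by field_simp; ring] at this
    exact this
  have h4 : Continuous fun y : ℝ => cexp (y * I) := by fun_prop
  have h5 := ((h4.tendsto 0).comp ha).mul h1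
  have e : cexp ((0 : ℝ) * I) * cexp (-(sig2 l * (t / √(sig2 l)) ^ 2 / 2 : ℝ)) =
      charFun (gaussianReal 0 1) t := by
    rw [charFun_gaussianReal, div_pow, Real.sq_sqrt (sig2_pos l).le,
      mul_div_cancel₀ _ (sig2_pos l).ne']
    simp
  rw [e] at h5
  refine h5.congr ?_
  intro n
  simp only [Function.comp]
  rw [charFun_nu, ← mul_div_assoc, Finset.mul_sum]
  congr 1
  apply Finset.sum_congr rfl
  intro P _
  rw [← Complex.exp_add, ← add_mul, ← ofReal_add, ← ofReal_mul]
  congr 3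
  unfold yy
  rw [Real.sqrt_div' _ (by positivity)]
  have hn : (0 : ℝ) < √((n : ℝ) + 1) := by positivity
  field_simp
  ring

/-- the law as a probability measure -/
noncomputable def nuP (l : ℕ) (x : ℝ) (n : ℕ) : ProbabilityMeasure ℝ := ⟨nu l x n, inferInstance⟩

/-- the standard Gaussian as a probability measure -/
noncomputable def gaussP : ProbabilityMeasure ℝ := ⟨gaussianReal 0 1, inferInstance⟩

lemma nu_lim {l : ℕ} (hl : 1 ≤ l) (x : ℝ) :
    Tendsto (fun n => (nu l x n (Set.Iic x)).toReal) atTop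
      (𝓝 ((gaussianReal 0 1 (Set.Iic x)).toReal)) := by
  have h : Tendsto (nuP l x) atTop (𝓝 gaussP) :=
    ProbabilityMeasure.tendsto_iff_tendsto_charFun.2 fun t => charFun_nu_lim hl x t
  have hna : NullSingletonClass (gaussianReal 0 1) := nullSingletonClass_gaussianReal one_ne_zero
  have h2 := ProbabilityMeasure.tendsto_measure_of_null_frontier_of_tendsto' h (E := Set.Iic x) (by
    rw [frontier_Iic]
    exact hna.measure_singleton x)
  exact (ENNReal.tendsto_toReal (measure_ne_top _ _)).comp h2

end NCCLT

/-- Central limit theorem for the number of blocks of a fixed size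
`l ≥ 1`: with `μ_n` the mean and `σ_n²` the variance of `X_n^{(l)}`, for every real `x`
the probability `(1/C_n)·#{π ∈ NC(n) : k_l(π) ≤ μ_n + x σ_n}` converges to `Φ(x)`,
the standard Gaussian cumulative distribution function. -/
theorem numBlocksOfSize_CLT (l : ℕ) (hl : 1 ≤ l) (x : ℝ) :
    Tendsto
      (fun n : ℕ =>
        (Nat.card {π : NCPart n //
            (numBlocksOfSize l π : ℝ) ≤
              meanBlocksOfSize l n + x * Real.sqrt (varBlocksOfSize l n)} : ℝ) /
          (Fintype.card (NCPart n) : ℝ))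
      atTop
      (nhds (((gaussianReal 0 1) (Set.Iic x)).toReal)) := by
  simpa only [NCCLT.nu_Iic] using NCCLT.nu_lim hl x
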